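/- arXiv:math/0101204 — 2 statements merged into one kernel-verified Lean document; each statement's English description precedes it below -/
import Mathlib

section
/- Let p be a prime number and define the set of rational numbers P(p) = {0, 1, 1/16, 9/16} ∪ { r²/(4p) : r ∈ ℤ, 1 ≤ r ≤ p }. Then for every λ ∈ P(p) with λ ≠ 0 and every positive integer n, the rational number λ + n does not belong to P(p). -/
/-- The set `P(p) = {0, 1, 1/16, 9/16} ∪ { r²/(4p) : r ∈ ℤ, 1 ≤ r ≤ p }` of
lowest weights of the irreducible modules of the charge conjugation orbifold. -/
def lowestWeights (p : ℕ) : Set ℚ :=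
  {0, 1, 1/16, 9/16} ∪
    {x : ℚ | ∃ r : ℤ, 1 ≤ r ∧ r ≤ (p : ℤ) ∧ x = (r : ℚ) ^ 2 / (4 * (p : ℚ))}

/-- Let `p` be a prime number.  For every `λ ∈ P(p)` with `λ ≠ 0` and every
positive integer `n`, the rational number `λ + n` is not in `P(p)`. -/
theorem stmt_5 (p : ℕ) (hp : p.Prime) (lam : ℚ) (hlam : lam ∈ lowestWeights p)
    (hne : lam ≠ 0) (n : ℤ) (hn : 1 ≤ n) :
    lam + (n : ℚ) ∉ lowestWeights p := by
  have hp0 : (0:ℚ) < p := by exact_mod_cast hp.pos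
  have hn' : (1:ℚ) ≤ n := by exact_mod_cast hn
  have h4 : ¬ (4:ℤ) ∣ (p:ℤ) := by
    intro h
    have h' : 4 ∣ p := by exact_mod_cast h
    rcases (Nat.dvd_prime hp).1 h' with h1 | h1
    · omega
    · rw [← h1] at hp
      revert hp
      norm_num
  have hpi : Prime (p:ℤ) := Nat.prime_iff_prime_int.1 hp
  have hpos : 0 < lam := by
    rcases hlam with (h | h | h | h) | ⟨r, h1, h2, h⟩
    · exact absurd h hne
    · rw [h]; norm_num
    · rw [h]; norm_num
    · rw [show lam = 9/16 from h]; norm_num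
    · have : (0:ℚ) < r := by exact_mod_cast h1
      rw [h]; positivity
  rintro ((h | h | h | h) | ⟨s, hs1, hs2, hs⟩)
  · linarith
  · linarith
  · linarith
  · have h' : lam + n = 9/16 := h
    linarith
  rw [eq_div_iff (by positivity)] at hs
  rcases hlam with (h | h | h | h) | ⟨r, h1, h2, h⟩
  · exact hne h
  · rw [h] at hs
    have e : (p:ℤ) * (4 * (1 + n)) = s ^ 2 := by
      have : (p:ℚ) * (4 * (1 + n)) = s ^ 2 := by linarith
      exact_mod_cast this
    have d : (p:ℤ) ∣ s := hpi.dvd_of_dvd_pow ⟨_, e.symm⟩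
    have hsp : s = p := le_antisymm hs2 (Int.le_of_dvd (by omega) d)
    rw [hsp, sq] at e
    have := mul_left_cancel₀ hpi.ne_zero e
    exact h4 ⟨_, this.symm⟩
  · rw [h] at hs
    have e : (p:ℤ) * (1 + 16 * n) = 4 * s ^ 2 := by
      have : (p:ℚ) * (1 + 16 * n) = 4 * s ^ 2 := by linarith
      exact_mod_cast this
    exact h4 ⟨s ^ 2 - 4 * p * n, by linarith⟩
  · rw [show lam = 9/16 from h] at hs
    have e : (p:ℤ) * (9 + 16 * n) = 4 * s ^ 2 := by
      have : (p:ℚ) * (9 + 16 * n) = 4 * s ^ 2 := by linarith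
      exact_mod_cast this
    exact h4 ⟨s ^ 2 - 4 * p * n - 2 * p, by linarith⟩
  · have e : (s - r) * (s + r) = p * (4 * n) := by
      have : ((s:ℚ) - r) * (s + r) = p * (4 * n) := by
        rw [h] at hs
        field_simp at hs
        linarith
      exact_mod_cast this
    have hpz : (0:ℤ) < p := by exact_mod_cast hp.pos
    have hlt : 0 < s - r := by
      have : 0 < (s - r) * (s + r) := by rw [e]; positivity
      exact pos_of_mul_pos_left this (by omega)
    rcases hpi.dvd_or_dvd ⟨_, e⟩ with d | d
    · have := Int.le_of_dvd hlt d
      omega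
    · obtain ⟨k, hk⟩ := d
      have k1 : k = 1 := by
        have : 0 < k := by
          by_contra hc
          nlinarith
        have : k < 2 := by
          by_contra hc
          nlinarith
        omega
      subst k1
      rw [hk] at e
      have : s - r = 4 * n := mul_left_cancel₀ hpi.ne_zero (by linarith)
      rcases hp.eq_two_or_odd with h2 | h2
      · omega
      · omega
end

section
/- Let k be an integer with k ≥ 2 that is not prime. Then there exist integers r and s with 0 ≤ r < s ≤ k such that the rational number (s² − r²)/(4k) is an integer. -/
/-- Let `k ≥ 2` be an integer that is not prime.  Then there exist integers
`r, s` with `0 ≤ r < s ≤ k` such that `(s² - r²)/(4k)` is an integer. -/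
theorem stmt_6 (k : ℕ) (hk : 2 ≤ k) (hnp : ¬ k.Prime) :
    ∃ r s : ℤ, 0 ≤ r ∧ r < s ∧ s ≤ (k : ℤ) ∧
      ∃ n : ℤ, ((s : ℚ) ^ 2 - (r : ℚ) ^ 2) / (4 * (k : ℚ)) = (n : ℚ) := by
  obtain ⟨a, ⟨b, rfl⟩, ha, hlt⟩ := Nat.exists_dvd_of_not_prime2 hk hnp
  have hb : 2 ≤ b := by
    by_contra h
    have : b = 0 ∨ b = 1 := by omega
    rcases this with rfl | rfl <;> simp at hlt
  have ha' : (2 : ℤ) ≤ a := by exact_mod_cast ha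
  have hb' : (2 : ℤ) ≤ b := by exact_mod_cast hb
  refine ⟨|(a : ℤ) - b|, a + b, abs_nonneg _, ?_, ?_, 1, ?_⟩
  · rw [abs_lt]; constructor <;> linarith
  · push_cast; nlinarith
  · have h1 : (a : ℚ) ≠ 0 := by positivity
    have h2 : (b : ℚ) ≠ 0 := by positivity
    push_cast
    rw [sq_abs]
    field_simp
    ring
end
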